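/- Let A ∈ M₃(ℍ) be strictly upper triangular (a_{ij} = 0 for i ≥ j), with entries a₁₂, a₁₃, a₂₃ above the diagonal. Then W(A) is a disk with center at the origin (i.e. there exists r ≥ 0 with W(A) = 𝔻_ℍ(0, r)) if and only if A is cycle-free, equivalently if and only if a₁₂ a₁₃ a₂₃ = 0. -/

import Mathlib

/-- The quaternionic numerical range of a square quaternionic matrix. -/
def qnr {ι : Type*} [Fintype ι] (A : Matrix ι ι (Quaternion ℝ)) : Set (Quaternion ℝ) :=
  {q | ∃ x : ι → Quaternion ℝ, (∑ i, ‖x i‖ ^ 2) = 1 ∧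
    q = ∑ i, ∑ j, star (x i) * A i j * x j}

/-- The undirected graph associated with a quaternionic matrix `A`: distinct vertices `i, j`
are adjacent iff `A i j ≠ 0` or `A j i ≠ 0`. -/
def graphOf {n : ℕ} (A : Matrix (Fin n) (Fin n) (Quaternion ℝ)) : SimpleGraph (Fin n) :=
  SimpleGraph.fromRel (fun i j => A i j ≠ 0)

/-!
Replace the entries of `A` by their norms: the numerical range of `A` lies in the ball whose radius
`m` is the maximum of the real form `∑ ‖a i j‖ v i v j` on the unit sphere. If `A = D (u |A|) D⋆`
for a diagonal matrix `D` of unit quaternions, then the range contains `u` times every value of the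
real form, in particular `m u` (and all of `[0, m] u` if some diagonal entry vanishes). When the
graph of `A` is a forest and edges carry one nonzero entry each, such a `D` exists for every unit
quaternion `u`, being determined along paths from the roots, so the range is the whole ball.

Conversely, if the graph is connected, then a maximizer of the real form has no zero coordinate,
and the equality case of the triangle inequality shows that `m u` lies in the range only if such a
`D` exists. A strictly upper triangular `3 × 3` matrix has a `D` for some `u`, so if its range is a
ball, the radius is at least `m` and there is a `D` for `u = 1` and for `u = -1`. Comparing
`a₀₁ a₁₂` with `a₀₂`, the two signs contradict each other when no entry vanishes.
-/

open Quaternion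

theorem eq_norm_smul_of_sum_eq_sum_norm_smul {κ E : Type*} [NormedAddCommGroup E]
    [InnerProductSpace ℝ E] {s : Finset κ} {f : κ → E} {u : E} (hu : ‖u‖ = 1)
    (hf : ∑ k ∈ s, f k = (∑ k ∈ s, ‖f k‖) • u) : ∀ k ∈ s, f k = ‖f k‖ • u := by
  have hle : ∀ k ∈ s, inner ℝ (f k) u ≤ ‖f k‖ := fun k _ => by
    simpa [hu] using real_inner_le_norm (f k) u
  have hsum : ∑ k ∈ s, inner ℝ (f k) u = ∑ k ∈ s, ‖f k‖ := by
    rw [← sum_inner, hf, real_inner_smul_left, real_inner_self_eq_norm_sq, hu, one_pow, mul_one]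
  intro k hk
  have hinner : inner ℝ (f k) u = ‖f k‖ * ‖u‖ := by
    rw [hu, mul_one, (Finset.sum_eq_sum_iff_of_le hle).1 hsum k hk]
  simpa [hu] using inner_eq_norm_mul_iff_real.1 hinner

theorem exists_unitary_eq_norm_smul (q : ℍ[ℝ]) : ∃ u : unitary ℍ[ℝ], q = ‖q‖ • (u : ℍ[ℝ]) := by
  rcases eq_or_ne q 0 with rfl | hq
  · exact ⟨1, by simp⟩
  · have hq' : ‖q‖ ≠ 0 := norm_ne_zero_iff.2 hq
    refine ⟨⟨‖q‖⁻¹ • q, Unitary.mem_iff.2 ⟨?_, ?_⟩⟩, (smul_inv_smul₀ hq' q).symm⟩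
    · rw [Quaternion.star_mul_self, normSq_eq_norm_mul_self, norm_smul]
      simp [hq']
    · rw [Quaternion.self_mul_star, normSq_eq_norm_mul_self, norm_smul]
      simp [hq']

section Forest

variable {V α : Type*} {G : SimpleGraph V}

/-- The label of the starting vertex of a walk when its endpoint is labelled `a₀` and labels are
carried backwards along each step `v — w` of the walk, from `w` to `v`, by `T w v`. -/
def transportAlong (T : ∀ v w, G.Adj v w → α → α) (a₀ : α) {v r : V} : G.Walk v r → α
  | .nil => a₀
  | .cons h p => T _ _ h.symm (transportAlong T a₀ p)

theorem exists_forall_adj_of_isAcyclic [Nonempty α] (hG : G.IsAcyclic)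
    {R : V → V → α → α → Prop} (hsymm : ∀ {v w a b}, R v w a b → R w v b a)
    (hext : ∀ v w, G.Adj v w → ∀ a, ∃ b, R v w a b) :
    ∃ f : V → α, ∀ v w, G.Adj v w → R v w (f v) (f w) := by
  classical
  choose T hT using hext
  obtain ⟨a₀⟩ := ‹Nonempty α›
  have hroot (v : V) : ∃ p : G.Walk v (G.connectedComponentMk v).out, p.IsPath := by
    have hreach : G.Reachable v (G.connectedComponentMk v).out :=
      SimpleGraph.ConnectedComponent.exact (Quot.out_eq _).symm
    obtain ⟨p, hp⟩ := hreach.exists_isPath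
    exact ⟨p, hp⟩
  choose P hP using hroot
  refine ⟨fun v => transportAlong T a₀ (P v), fun v w hvw => ?_⟩
  have hcons : ∀ {v w r}, G.Adj v w → ∀ (p : G.Walk v r) (q : G.Walk w r), p.IsPath → q.IsPath →
      w ∉ p.support → R v w (transportAlong T a₀ p) (transportAlong T a₀ q) := by
    intro v w r hvw p q hp hq hwp
    have hpq : q = .cons hvw.symm p :=
      congrArg Subtype.val ((hG.subsingleton_path w r).elim ⟨q, hq⟩ ⟨_, hp.cons hwp⟩)
    rw [hpq]
    exact hT v w hvw _
  suffices ∀ {r s} (p : G.Walk v r) (q : G.Walk w s), r = s → p.IsPath → q.IsPath →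
      R v w (transportAlong T a₀ p) (transportAlong T a₀ q) from
    this _ _ (congrArg Quot.out (SimpleGraph.ConnectedComponent.sound hvw.reachable)) (hP v) (hP w)
  rintro r _ p q rfl hp hq
  by_cases hwp : w ∈ p.support
  · have hvq : v ∉ q.reverse.support :=
      hG.ne_mem_support_of_support_of_adj_of_isPath hp.reverse hq.reverse hvw (by simpa using hwp)
    exact hsymm (hcons hvw.symm q p hq hp (by simpa using hvq))
  · exact hcons hvw p q hp hq hwp

end Forest

/-- `A = D (u |A|) D⋆` with `D` diagonal and unitary, where `|A|` is the entrywise absolute value: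
up to diagonal unitary similarity all entries of `A` have the same phase `u`. The unit quaternions
are encoded as `unitary ℍ[ℝ]`, for its group structure. -/
def IsPhaseAligned {ι : Type*} (A : Matrix ι ι ℍ[ℝ]) (u : unitary ℍ[ℝ]) : Prop :=
  ∃ d : ι → unitary ℍ[ℝ], ∀ i j, A i j = ‖A i j‖ • ((d i * u * (d j)⁻¹ : unitary ℍ[ℝ]) : ℍ[ℝ])

namespace IsPhaseAligned

variable {ι : Type*} {A : Matrix ι ι ℍ[ℝ]}

theorem neg {u : unitary ℍ[ℝ]} (h : IsPhaseAligned A u) : IsPhaseAligned (-A) (-u) := by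
  obtain ⟨d, hd⟩ := h
  refine ⟨d, fun i j => ?_⟩
  rw [Matrix.neg_apply, norm_neg, mul_neg, neg_mul, Unitary.coe_neg, smul_neg, ← hd]

theorem smul_mul_eq_smul (h : IsPhaseAligned A 1) (i j k : ι) :
    ‖A i k‖ • (A i j * A j k) = (‖A i j‖ * ‖A j k‖) • A i k := by
  obtain ⟨d, hd⟩ := h
  have hphase : d i * 1 * (d j)⁻¹ * (d j * 1 * (d k)⁻¹) = d i * 1 * (d k)⁻¹ := by group
  calc ‖A i k‖ • (A i j * A j k) = ‖A i k‖ • (‖A i j‖ * ‖A j k‖) •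
        ((d i * 1 * (d j)⁻¹ * (d j * 1 * (d k)⁻¹) : unitary ℍ[ℝ]) : ℍ[ℝ]) := by
          rw [hd i j, hd j k, smul_mul_smul_comm, ← hd, ← hd]; rfl
    _ = (‖A i j‖ * ‖A j k‖) • A i k := by rw [hphase, smul_comm, ← hd]

theorem mul_mul_eq_zero (h : IsPhaseAligned A 1) (h' : IsPhaseAligned A (-1)) (i j k : ι) :
    A i j * A i k * A j k = 0 := by
  have hpos := h.smul_mul_eq_smul i j k
  have hneg := (neg_neg (1 : unitary ℍ[ℝ]) ▸ h'.neg).smul_mul_eq_smul i j k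
  simp only [Matrix.neg_apply, norm_neg, neg_mul_neg, smul_neg] at hneg
  have hsmul : (‖A i j‖ * ‖A j k‖) • A i k = 0 := by
    rwa [hpos, eq_neg_iff_add_eq_zero, ← two_nsmul, ← Nat.cast_smul_eq_nsmul ℝ,
      smul_eq_zero_iff_right (by norm_num)] at hneg
  simp only [smul_eq_zero, mul_eq_zero, norm_eq_zero] at hsmul ⊢
  tauto

end IsPhaseAligned

section AbsForm

variable {ι : Type*} [Fintype ι]

/-- The real quadratic form `∑ ‖a i j‖ v i v j` of the entrywise absolute value of `A`. It bounds
`x⋆ A x` when `v i = ‖x i‖`. -/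
noncomputable def absForm (A : Matrix ι ι ℍ[ℝ]) (v : ι → ℝ) : ℝ :=
  ∑ i, ∑ j, ‖A i j‖ * v i * v j

variable {A : Matrix ι ι ℍ[ℝ]}

theorem absForm_smul (c : ℝ) (v : ι → ℝ) : absForm A (c • v) = c ^ 2 * absForm A v := by
  simp only [absForm, Finset.mul_sum, Pi.smul_apply, smul_eq_mul]
  exact Finset.sum_congr rfl fun i _ => Finset.sum_congr rfl fun j _ => by ring

theorem absForm_le_absForm_abs (v : ι → ℝ) : absForm A v ≤ absForm A fun i => |v i| := by
  refine Finset.sum_le_sum fun i _ => Finset.sum_le_sum fun j _ => ?_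
  rw [mul_assoc, mul_assoc, ← abs_mul]
  gcongr
  exact le_abs_self _

theorem absForm_nonneg {v : ι → ℝ} (hv : 0 ≤ v) : 0 ≤ absForm A v :=
  Finset.sum_nonneg fun i _ => Finset.sum_nonneg fun j _ =>
    mul_nonneg (mul_nonneg (norm_nonneg _) (hv i)) (hv j)

theorem absForm_add_single [DecidableEq ι] (v : ι → ℝ) (i : ι) (t : ℝ) :
    absForm A (v + Pi.single i t) =
      absForm A v + t * ∑ j, (‖A i j‖ + ‖A j i‖) * v j + ‖A i i‖ * t ^ 2 := by
  simp only [absForm, Pi.add_apply, Pi.single_apply, mul_add, mul_comm, mul_ite, mul_zero,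
    mul_left_comm, ite_self, Finset.sum_add_distrib, Finset.sum_ite_eq', Finset.mem_univ,
    ↓reduceIte, Finset.sum_ite_irrel, Finset.sum_const_zero, Finset.mul_sum]
  ring

theorem norm_star_mul_mul (a x y : ℍ[ℝ]) : ‖star x * a * y‖ = ‖a‖ * ‖x‖ * ‖y‖ := by
  rw [norm_mul, norm_mul, Quaternion.norm_star, mul_comm ‖x‖]

theorem norm_sum_star_mul_mul_le_absForm (x : ι → ℍ[ℝ]) :
    ‖∑ i, ∑ j, star (x i) * A i j * x j‖ ≤ absForm A fun i => ‖x i‖ :=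
  norm_sum_le_of_le _ fun _ _ => norm_sum_le_of_le _ fun _ _ => (norm_star_mul_mul ..).le

/-- A nonnegative unit vector at which `absForm A` attains its maximum `absForm A p` over the unit
sphere; maximality is stated in homogeneous form. -/
structure IsPerronVector (A : Matrix ι ι ℍ[ℝ]) (p : ι → ℝ) : Prop where
  nonneg : 0 ≤ p
  sum_sq : ∑ i, p i ^ 2 = 1
  absForm_le : ∀ v : ι → ℝ, absForm A v ≤ absForm A p * ∑ i, v i ^ 2

theorem exists_isPerronVector [Nonempty ι] (A : Matrix ι ι ℍ[ℝ]) : ∃ p, IsPerronVector A p := by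
  classical
  let k := Classical.arbitrary ι
  have hcont : Continuous fun v : EuclideanSpace ℝ ι => absForm A v.ofLp := by
    unfold absForm; fun_prop
  obtain ⟨w, hw, hmax⟩ := (isCompact_sphere (0 : EuclideanSpace ℝ ι) 1).exists_isMaxOn
    ⟨EuclideanSpace.single k 1, by simp⟩ hcont.continuousOn
  rw [mem_sphere_zero_iff_norm] at hw
  refine ⟨fun i => |w i|, fun i => abs_nonneg _, ?_, fun v => ?_⟩
  · simp only [sq_abs, ← EuclideanSpace.real_norm_sq_eq, hw, one_pow]
  set V : EuclideanSpace ℝ ι := WithLp.toLp 2 v with hV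
  have hVv : ∑ i, v i ^ 2 = ‖V‖ ^ 2 := by rw [EuclideanSpace.real_norm_sq_eq]
  rcases eq_or_ne V 0 with h0 | h0
  · have : v = 0 := by simpa [hV] using h0
    simp [this, absForm]
  have hV0 : 0 < ‖V‖ := norm_pos_iff.2 h0
  calc absForm A v = absForm A (‖V‖⁻¹ • v) * ‖V‖ ^ 2 := by rw [absForm_smul]; field_simp
    _ ≤ absForm A w.ofLp * ‖V‖ ^ 2 := by
      gcongr
      exact hmax (a := ‖V‖⁻¹ • V) (by simp [norm_smul, hV0.ne'])
    _ ≤ _ := by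
      rw [hVv]
      gcongr
      exact absForm_le_absForm_abs _

theorem IsPerronVector.add_norm_mul_eq_zero {p : ι → ℝ} (hp : IsPerronVector A p) {i : ι}
    (hi : p i = 0) (j : ι) : (‖A i j‖ + ‖A j i‖) * p j = 0 := by
  classical
  have hterm : ∀ j ∈ Finset.univ, 0 ≤ (‖A i j‖ + ‖A j i‖) * p j := fun j _ =>
    mul_nonneg (by positivity) (hp.nonneg j)
  set L := ∑ j, (‖A i j‖ + ‖A j i‖) * p j with hL
  -- Raising the zero coordinate to `t` gains `t * L`, but maximality allows only order `t ^ 2`.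
  have hpert : ∀ t > 0, L ≤ absForm A p * t := by
    intro t ht
    have hsq : ∑ j, (p + Pi.single i t : ι → ℝ) j ^ 2 = 1 + t ^ 2 := by
      simp [add_sq, Finset.sum_add_distrib, hp.sum_sq, Pi.single_apply, hi]
    have hmax := hp.absForm_le (p + Pi.single i t)
    rw [absForm_add_single, hsq, ← hL] at hmax
    have hdiag : 0 ≤ ‖A i i‖ * t ^ 2 := by positivity
    nlinarith
  have hL0 : L ≤ 0 := by
    have hlim : Filter.Tendsto (fun t => absForm A p * t) (nhdsWithin 0 (Set.Ioi 0)) (nhds 0) := by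
      simpa using ((continuous_const_mul (absForm A p)).tendsto 0).mono_left nhdsWithin_le_nhds
    exact ge_of_tendsto hlim (Filter.eventually_of_mem self_mem_nhdsWithin hpert)
  exact (Finset.sum_eq_zero_iff_of_nonneg hterm).1
    (le_antisymm hL0 (Finset.sum_nonneg hterm)) j (Finset.mem_univ j)

theorem IsPerronVector.pos_of_preconnected {n : ℕ} {A : Matrix (Fin n) (Fin n) ℍ[ℝ]}
    {p : Fin n → ℝ} (hp : IsPerronVector A p) (hA : (graphOf A).Preconnected) (i : Fin n) :
    0 < p i := by
  refine (hp.nonneg i).lt_of_ne' fun hi => ?_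
  have hstep : ∀ j k, (graphOf A).Adj j k → p j = 0 → p k = 0 := by
    intro j k hjk hj
    have hne : 0 < ‖A j k‖ + ‖A k j‖ := by
      rcases ((SimpleGraph.fromRel_adj _ _ _).1 hjk).2 with hjk | hkj
      · exact add_pos_of_pos_of_nonneg (norm_pos_iff.2 hjk) (norm_nonneg _)
      · exact add_pos_of_nonneg_of_pos (norm_nonneg _) (norm_pos_iff.2 hkj)
    exact (mul_eq_zero.1 (hp.add_norm_mul_eq_zero hj k)).resolve_left hne.ne'
  have hzero : ∀ j, p j = 0 := fun j => by
    obtain ⟨w⟩ := hA i j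
    induction w with
    | nil => exact hi
    | cons hadj _ ih => exact ih (hstep _ _ hadj hi)
  simpa [hzero] using hp.sum_sq

theorem IsPerronVector.norm_le_of_mem_qnr {p : ι → ℝ} (hp : IsPerronVector A p) {q : ℍ[ℝ]}
    (hq : q ∈ qnr A) : ‖q‖ ≤ absForm A p := by
  obtain ⟨x, hx, rfl⟩ := hq
  calc _ ≤ absForm A fun i => ‖x i‖ := norm_sum_star_mul_mul_le_absForm x
    _ ≤ absForm A p * ∑ i, ‖x i‖ ^ 2 := hp.absForm_le _
    _ = absForm A p := by rw [hx, mul_one]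

theorem IsPerronVector.exists_absForm_eq {p : ι → ℝ} (hp : IsPerronVector A p) {k : ι}
    (hk : A k k = 0) {t : ℝ} (ht₀ : 0 ≤ t) (ht : t ≤ absForm A p) :
    ∃ v : ι → ℝ, ∑ i, v i ^ 2 = 1 ∧ absForm A v = t := by
  classical
  -- Interpolating the squares of the coordinates stays on the unit sphere.
  let w (s : ℝ) (i : ι) : ℝ := (1 - s) * Pi.single (M := fun _ => ℝ) k 1 i + s * p i ^ 2
  have hsingle : (0 : ι → ℝ) ≤ Pi.single k 1 := Pi.single_nonneg.2 zero_le_one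
  have hw : ∀ s ∈ Set.Icc (0 : ℝ) 1, ∀ i, 0 ≤ w s i := fun s hs i =>
    add_nonneg (mul_nonneg (sub_nonneg.2 hs.2) (hsingle i))
      (mul_nonneg hs.1 (sq_nonneg _))
  have hcont : Continuous fun s => absForm A fun i => √(w s i) := by
    unfold absForm w; fun_prop
  have h₀ : absForm A (fun i => √(w 0 i)) = 0 := by
    simp [absForm, w, Pi.single_apply, hk, apply_ite Real.sqrt]
  have h₁ : absForm A (fun i => √(w 1 i)) = absForm A p := by
    simp [absForm, w, Real.sqrt_sq (hp.nonneg _)]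
  obtain ⟨s, hs, hst⟩ := intermediate_value_Icc zero_le_one hcont.continuousOn
    (show t ∈ _ by rw [h₀, h₁]; exact ⟨ht₀, ht⟩)
  refine ⟨fun i => √(w s i), ?_, hst⟩
  simp only [Real.sq_sqrt (hw s hs _), w, Finset.sum_add_distrib, ← Finset.mul_sum, hp.sum_sq]
  simp

theorem IsPhaseAligned.absForm_smul_mem_qnr {u : unitary ℍ[ℝ]} (h : IsPhaseAligned A u)
    {v : ι → ℝ} (hv : ∑ i, v i ^ 2 = 1) : absForm A v • (u : ℍ[ℝ]) ∈ qnr A := by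
  obtain ⟨d, hd⟩ := h
  refine ⟨fun i => v i • (d i : ℍ[ℝ]), ?_, ?_⟩
  · simpa [norm_smul, CStarRing.norm_coe_unitary] using hv
  simp only [absForm, Finset.sum_smul]
  refine Finset.sum_congr rfl fun i _ => Finset.sum_congr rfl fun j _ => ?_
  have hphase : star (d i) * (d i * u * (d j)⁻¹) * d j = u := by
    rw [Unitary.star_eq_inv]; group
  calc (‖A i j‖ * v i * v j) • (u : ℍ[ℝ])
      = (‖A i j‖ * v i * v j) •
          ((star (d i) * (d i * u * (d j)⁻¹) * d j : unitary ℍ[ℝ]) : ℍ[ℝ]) := by rw [hphase]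
    _ = star (v i • (d i : ℍ[ℝ])) *
        (‖A i j‖ • ((d i * u * (d j)⁻¹ : unitary ℍ[ℝ]) : ℍ[ℝ])) * (v j • (d j : ℍ[ℝ])) := by
          simp only [Quaternion.star_smul, smul_mul_smul_comm, mul_comm ‖A i j‖ (v i)]
          rfl
    _ = _ := by rw [← hd]

theorem star_mul_mul_eq_of_sum_eq_absForm_smul {x : ι → ℍ[ℝ]} {u : ℍ[ℝ]} (hu : ‖u‖ = 1)
    (hx : ∑ i, ∑ j, star (x i) * A i j * x j = absForm A (fun i => ‖x i‖) • u) (i j : ι) :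
    star (x i) * A i j * x j = (‖A i j‖ * ‖x i‖ * ‖x j‖) • u := by
  have hsum : ∑ k : ι × ι, star (x k.1) * A k.1 k.2 * x k.2 =
      (∑ k : ι × ι, ‖star (x k.1) * A k.1 k.2 * x k.2‖) • u := by
    simpa only [norm_star_mul_mul, Fintype.sum_prod_type, absForm] using hx
  rw [← norm_star_mul_mul]
  exact eq_norm_smul_of_sum_eq_sum_norm_smul hu hsum (i, j) (Finset.mem_univ _)

theorem IsPerronVector.isPhaseAligned_of_smul_mem_qnr {n : ℕ} {A : Matrix (Fin n) (Fin n) ℍ[ℝ]}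
    {p : Fin n → ℝ} (hp : IsPerronVector A p) (hA : (graphOf A).Preconnected) {u : unitary ℍ[ℝ]}
    (hu : absForm A p • (u : ℍ[ℝ]) ∈ qnr A) : IsPhaseAligned A u := by
  have hu₁ : ‖(u : ℍ[ℝ])‖ = 1 := CStarRing.norm_coe_unitary u
  obtain ⟨x, hx, hxu⟩ := hu
  have hmax : absForm A (fun i => ‖x i‖) = absForm A p := by
    refine le_antisymm (by simpa [hx] using hp.absForm_le fun i => ‖x i‖) ?_
    calc absForm A p = ‖absForm A p • (u : ℍ[ℝ])‖ := by
          rw [norm_smul, hu₁, mul_one, Real.norm_of_nonneg (absForm_nonneg hp.nonneg)]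
      _ ≤ absForm A fun i => ‖x i‖ := hxu ▸ norm_sum_star_mul_mul_le_absForm x
  have hxp : IsPerronVector A fun i => ‖x i‖ :=
    ⟨fun i => norm_nonneg _, hx, by rw [hmax]; exact hp.absForm_le⟩
  have hterm := star_mul_mul_eq_of_sum_eq_absForm_smul hu₁ (hmax ▸ hxu.symm)
  choose d hd using fun i => exists_unitary_eq_norm_smul (x i)
  refine ⟨d, fun i j => ?_⟩
  have hpos : ‖x i‖ * ‖x j‖ ≠ 0 :=
    (mul_pos (hxp.pos_of_preconnected hA i) (hxp.pos_of_preconnected hA j)).ne'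
  have hphase : star (d i : ℍ[ℝ]) * A i j * d j = ‖A i j‖ • (u : ℍ[ℝ]) := by
    apply smul_right_injective _ hpos
    calc (‖x i‖ * ‖x j‖) • (star (d i : ℍ[ℝ]) * A i j * d j)
        = star (‖x i‖ • (d i : ℍ[ℝ])) * A i j * (‖x j‖ • (d j : ℍ[ℝ])) := by
          simp only [Quaternion.star_smul, smul_mul_assoc, mul_smul_comm, smul_smul]
          rw [mul_comm]
      _ = (‖A i j‖ * ‖x i‖ * ‖x j‖) • (u : ℍ[ℝ]) := by rw [← hd i, ← hd j, hterm]
      _ = (‖x i‖ * ‖x j‖) • ‖A i j‖ • (u : ℍ[ℝ]) := by rw [smul_smul]; congr 1; ring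
  calc A i j = d i * star (d i : ℍ[ℝ]) * A i j * (d j * star (d j : ℍ[ℝ])) := by simp
    _ = d i * (star (d i : ℍ[ℝ]) * A i j * d j) * star (d j : ℍ[ℝ]) := by simp only [mul_assoc]
    _ = ‖A i j‖ • ((d i * u * (d j)⁻¹ : unitary ℍ[ℝ]) : ℍ[ℝ]) := by
      rw [hphase, mul_smul_comm, smul_mul_assoc]; rfl

theorem IsPerronVector.qnr_eq_closedBall {p : ι → ℝ} (hp : IsPerronVector A p) {k : ι}
    (hk : A k k = 0) (hA : ∀ u, IsPhaseAligned A u) :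
    qnr A = Metric.closedBall 0 (absForm A p) := by
  ext q
  rw [mem_closedBall_zero_iff]
  refine ⟨hp.norm_le_of_mem_qnr, fun hq => ?_⟩
  obtain ⟨u, hu⟩ := exists_unitary_eq_norm_smul q
  obtain ⟨v, hv, hvq⟩ := hp.exists_absForm_eq hk (norm_nonneg q) hq
  rw [hu, ← hvq]
  exact (hA u).absForm_smul_mem_qnr hv

theorem IsPhaseAligned.of_qnr_eq_closedBall {n : ℕ} {A : Matrix (Fin n) (Fin n) ℍ[ℝ]}
    (hconn : (graphOf A).Connected) {r : ℝ} (hr : qnr A = Metric.closedBall 0 r)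
    {u : unitary ℍ[ℝ]} (hu : IsPhaseAligned A u) (v : unitary ℍ[ℝ]) : IsPhaseAligned A v := by
  have := hconn.nonempty
  obtain ⟨p, hp⟩ := exists_isPerronVector A
  refine hp.isPhaseAligned_of_smul_mem_qnr hconn.preconnected ?_
  have hmem := hu.absForm_smul_mem_qnr hp.sum_sq
  rw [hr, mem_closedBall_zero_iff, norm_smul, CStarRing.norm_coe_unitary] at hmem ⊢
  exact hmem

theorem isPhaseAligned_of_isAcyclic {n : ℕ} {A : Matrix (Fin n) (Fin n) ℍ[ℝ]}
    (hA : (graphOf A).IsAcyclic) (hor : ∀ i j, A i j = 0 ∨ A j i = 0) (u : unitary ℍ[ℝ]) :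
    IsPhaseAligned A u := by
  let R (i j : Fin n) (a b : unitary ℍ[ℝ]) : Prop :=
    A i j = ‖A i j‖ • ((a * u * b⁻¹ : unitary ℍ[ℝ]) : ℍ[ℝ]) ∧
      A j i = ‖A j i‖ • ((b * u * a⁻¹ : unitary ℍ[ℝ]) : ℍ[ℝ])
  have hext : ∀ i j, (graphOf A).Adj i j → ∀ a, ∃ b, R i j a b := by
    intro i j _ a
    rcases hor i j with hij | hji
    · obtain ⟨c, hc⟩ := exists_unitary_eq_norm_smul (A j i)
      refine ⟨c * a * u⁻¹, by simp [hij], ?_⟩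
      rwa [show c * a * u⁻¹ * u * a⁻¹ = c by group]
    · obtain ⟨c, hc⟩ := exists_unitary_eq_norm_smul (A i j)
      refine ⟨c⁻¹ * a * u, ?_, by simp [hji]⟩
      rwa [show a * u * (c⁻¹ * a * u)⁻¹ = c by group]
  obtain ⟨d, hd⟩ := exists_forall_adj_of_isAcyclic hA (R := R) And.symm hext
  refine ⟨d, fun i j => ?_⟩
  by_cases hij : A i j = 0
  · simp [hij]
  · have hne : i ≠ j := by
      rintro rfl
      exact hij (or_self_iff.1 (hor i i))
    exact (hd i j ((SimpleGraph.fromRel_adj _ _ _).2 ⟨hne, .inl hij⟩)).1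

theorem exists_qnr_eq_closedBall_of_isAcyclic {n : ℕ} [NeZero n] {A : Matrix (Fin n) (Fin n) ℍ[ℝ]}
    (hA : (graphOf A).IsAcyclic) (hor : ∀ i j, A i j = 0 ∨ A j i = 0) :
    ∃ r : ℝ, 0 ≤ r ∧ qnr A = Metric.closedBall 0 r := by
  obtain ⟨p, hp⟩ := exists_isPerronVector A
  exact ⟨absForm A p, absForm_nonneg hp.nonneg,
    hp.qnr_eq_closedBall (or_self_iff.1 (hor 0 0)) (isPhaseAligned_of_isAcyclic hA hor)⟩

end AbsForm

theorem eq_top_fin_three_iff {G : SimpleGraph (Fin 3)} :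
    G = ⊤ ↔ G.Adj 0 1 ∧ G.Adj 0 2 ∧ G.Adj 1 2 := by
  constructor
  · rintro rfl
    simp
  · rintro ⟨h01, h02, h12⟩
    refine SimpleGraph.eq_top_iff_forall_ne_adj.2 fun i j hij => ?_
    fin_cases i <;> fin_cases j <;>
      first | exact absurd rfl hij | assumption | exact SimpleGraph.Adj.symm ‹_›

theorem isAcyclic_fin_three_iff {G : SimpleGraph (Fin 3)} : G.IsAcyclic ↔ G ≠ ⊤ := by
  constructor
  · rintro hG rfl
    exact hG.cliqueFree le_rfl {0, 1, 2} (SimpleGraph.is3Clique_triple_iff.2 (by simp))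
  · intro hG
    obtain ⟨i, j, hij, hnadj⟩ := SimpleGraph.ne_top_iff_exists_not_adj.1 hG
    have hstar : ∀ i j : Fin 3, i ≠ j → ∃ k, ∀ a b, a ≠ b →
        (a = k ∨ b = k) ∨ (a = i ∧ b = j) ∨ (a = j ∧ b = i) := by decide
    obtain ⟨k, hk⟩ := hstar i j hij
    refine (SimpleGraph.isAcyclic_starGraph k).anti fun a b hab => ?_
    refine SimpleGraph.starGraph_adj.2 ⟨hab.ne, (hk a b hab.ne).resolve_right ?_⟩
    rintro (⟨rfl, rfl⟩ | ⟨rfl, rfl⟩)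
    exacts [hnadj hab, hnadj hab.symm]

section StrictUpper

variable {A : Matrix (Fin 3) (Fin 3) ℍ[ℝ]}

theorem graphOf_eq_top_iff_of_strictUpper (hupper : ∀ i j, j ≤ i → A i j = 0) :
    graphOf A = ⊤ ↔ A 0 1 * A 0 2 * A 1 2 ≠ 0 := by
  have h10 := hupper 1 0 (by decide)
  have h20 := hupper 2 0 (by decide)
  have h21 := hupper 2 1 (by decide)
  rw [eq_top_fin_three_iff]
  simp [graphOf, h10, h20, h21, and_assoc]

theorem exists_isPhaseAligned_of_strictUpper (hupper : ∀ i j, j ≤ i → A i j = 0) :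
    ∃ u, IsPhaseAligned A u := by
  obtain ⟨a, ha⟩ := exists_unitary_eq_norm_smul (A 0 1)
  obtain ⟨b, hb⟩ := exists_unitary_eq_norm_smul (A 0 2)
  obtain ⟨c, hc⟩ := exists_unitary_eq_norm_smul (A 1 2)
  -- With `d 0 = 1` the first row forces `d 1` and `d 2`, and the last entry then forces `u`.
  let u := a * c * b⁻¹
  have h01 : 1 * u * (a⁻¹ * u)⁻¹ = a := by group
  have h02 : 1 * u * (b⁻¹ * u)⁻¹ = b := by group
  have h12 : a⁻¹ * u * u * (b⁻¹ * u)⁻¹ = c := by unfold u; group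
  refine ⟨u, ![1, a⁻¹ * u, b⁻¹ * u], fun i j => ?_⟩
  rcases le_or_gt j i with hji | hij
  · rw [hupper i j hji, norm_zero, zero_smul]
  obtain ⟨rfl, rfl⟩ | ⟨rfl, rfl⟩ | ⟨rfl, rfl⟩ :
      (i = 0 ∧ j = 1) ∨ (i = 0 ∧ j = 2) ∨ (i = 1 ∧ j = 2) := by lia
  · rw [← h01] at ha
    exact ha
  · rw [← h02] at hb
    exact hb
  · rw [← h12] at hc
    exact hc

end StrictUpper

/-- For a strictly upper triangular `A ∈ M₃(ℍ)`, the numerical range `W(A)` is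
a closed disk centered at the origin iff `A` is cycle-free, equivalently iff
`a₁₂ a₁₃ a₂₃ = 0`. -/
theorem qnr_3x3_disk_iff_cycle_free (A : Matrix (Fin 3) (Fin 3) (Quaternion ℝ))
    (hupper : ∀ i j, j ≤ i → A i j = 0) :
    ((∃ r : ℝ, 0 ≤ r ∧ qnr A = Metric.closedBall (0 : Quaternion ℝ) r) ↔
      (graphOf A).IsAcyclic) ∧
    ((graphOf A).IsAcyclic ↔ A 0 1 * A 0 2 * A 1 2 = 0) := by
  have hacyclic : (graphOf A).IsAcyclic ↔ A 0 1 * A 0 2 * A 1 2 = 0 :=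
    isAcyclic_fin_three_iff.trans (graphOf_eq_top_iff_of_strictUpper hupper).not_left
  refine ⟨⟨?_, fun hA => ?_⟩, hacyclic⟩
  · rintro ⟨r, -, hr⟩
    refine isAcyclic_fin_three_iff.2 fun htop => ?_
    have hconn : (graphOf A).Connected := htop ▸ SimpleGraph.connected_top
    obtain ⟨u, hu⟩ := exists_isPhaseAligned_of_strictUpper hupper
    exact (graphOf_eq_top_iff_of_strictUpper hupper).1 htop <| IsPhaseAligned.mul_mul_eq_zero
      (hu.of_qnr_eq_closedBall hconn hr 1) (hu.of_qnr_eq_closedBall hconn hr (-1)) 0 1 2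
  · exact exists_qnr_eq_closedBall_of_isAcyclic hA fun i j =>
      (le_total j i).imp (hupper i j) (hupper j i)
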